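/- arXiv:2301.03917 — 3 statements merged into one kernel-verified Lean document; each statement's English description precedes it below -/
import Mathlib

section
/- Let p be a prime and let G be a non-abelian finite p-group of order p^n whose nilpotency class is 2. Then every non-linear irreducible complex character χ of G vanishes at at least p^n − p^(n−2) elements of G. -/
open CategoryTheory

/-- The nilpotency class of a group: the least `m` with `upperCentralSeries G m = ⊤`.
(For nilpotent groups this agrees with `Group.nilpotencyClass`.) -/
noncomputable def nilClass (G : Type*) [Group G] : ℕ :=
  sInf {m : ℕ | upperCentralSeries G m = ⊤}

lemma aux_schur {G : Type} [Group G] [Fintype G] (V : FDRep ℂ G) (hV : Simple V)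
    (f : V →ₗ[ℂ] V) (hf : ∀ h, f ∘ₗ V.ρ h = V.ρ h ∘ₗ f) : ∃ c : ℂ, f = c • LinearMap.id := by
  have h1 : Module.finrank ℂ (V ⟶ V) = 1 := by
    simpa using finrank_endomorphism_simple_eq_one ℂ V
  have h2 : Module.finrank ℂ (Representation.invariants (Representation.linHom V.ρ V.ρ)) = 1 := by
    rw [← h1]
    exact LinearEquiv.finrank_eq (Representation.linHom.invariantsEquivFDRepHom V V)
  have mem : ∀ f : V →ₗ[ℂ] V, (∀ h, f ∘ₗ V.ρ h = V.ρ h ∘ₗ f) →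
      f ∈ Representation.invariants (Representation.linHom V.ρ V.ρ) := by
    intro f hf
    rw [Representation.mem_invariants]
    intro g
    rw [Representation.linHom_apply, hf, ← LinearMap.comp_assoc]
    have : V.ρ g ∘ₗ V.ρ g⁻¹ = LinearMap.id := by
      have := map_mul V.ρ g g⁻¹
      rw [mul_inv_cancel, map_one] at this
      exact this.symm
    rw [this, LinearMap.id_comp]
  have hne : (⟨LinearMap.id, mem LinearMap.id (fun _ => rfl)⟩ :
      Representation.invariants (Representation.linHom V.ρ V.ρ)) ≠ 0 := by
    intro h0
    have h0' : (LinearMap.id : V →ₗ[ℂ] V) = 0 := congrArg Subtype.val h0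
    have : Subsingleton (Representation.invariants (Representation.linHom V.ρ V.ρ)) := by
      refine subsingleton_of_forall_eq 0 fun x => Subtype.ext ?_
      change x.1 = 0
      rw [← LinearMap.comp_id x.1, h0', LinearMap.comp_zero]
    rw [Module.finrank_zero_of_subsingleton] at h2
    omega
  obtain ⟨c, hc⟩ := (finrank_eq_one_iff_of_nonzero' _ hne).1 h2 ⟨f, mem f hf⟩
  exact ⟨c, (congrArg Subtype.val hc).symm⟩

/-- If `G` is a non-abelian `p`-group of order `p^n` of nilpotency class `2`,
then every non-linear irreducible complex character of `G` vanishes at at least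
`p^n - p^(n-2)` elements. -/
theorem stmt6 {G : Type} [Group G] [Fintype G] {p n : ℕ} (hp : p.Prime)
    (hG : Fintype.card G = p ^ n)
    (hna : ¬ ∀ x y : G, x * y = y * x)
    (hclass : nilClass G = 2)
    (V : FDRep ℂ G) (hV : Simple V)
    (hnl : 1 < Module.finrank ℂ V) :
    p ^ n - p ^ (n - 2) ≤ {g : G | V.character g = 0}.ncard := by
  classical
  have hup : upperCentralSeries G 2 = ⊤ := by
    have : nilClass G ∈ {m : ℕ | upperCentralSeries G m = ⊤} := by
      apply Nat.sInf_mem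
      apply Nat.nonempty_of_sInf_eq_succ (k := 1)
      exact hclass
    rwa [hclass] at this
  have hcen : ∀ g h z : G, (g * h * g⁻¹ * h⁻¹) * z = z * (g * h * g⁻¹ * h⁻¹) := by
    intro g h z
    have hg : g ∈ Subgroup.upperCentralSeries G (1+1) := by
      change g ∈ upperCentralSeries G 2
      rw [hup]; trivial
    rw [Subgroup.mem_upperCentralSeries_succ_iff] at hg
    have := hg h
    rw [Subgroup.upperCentralSeries_one, Subgroup.mem_center_iff] at this
    exact (this z).symm
  let Z : Finset G := Finset.univ.filter fun g => ∀ h, V.ρ g ∘ₗ V.ρ h = V.ρ h ∘ₗ V.ρ g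
  have hmul : ∀ g h, V.ρ g ∘ₗ V.ρ h = V.ρ (g * h) := fun g h => (map_mul V.ρ g h).symm
  have hvan : ∀ g, g ∉ Z → V.character g = 0 := by
    intro g hg
    simp only [Z, Finset.mem_filter, Finset.mem_univ, true_and, not_forall] at hg
    obtain ⟨h, hh⟩ := hg
    obtain ⟨c, hc⟩ := aux_schur V hV (V.ρ (h * g * h⁻¹ * g⁻¹)) (by
      intro z; rw [hmul, hmul, hcen])
    have e1 : V.ρ (h * g * h⁻¹) = c • V.ρ g := by
      have : h * g * h⁻¹ = (h * g * h⁻¹ * g⁻¹) * g := by group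
      rw [this, map_mul, hc]; rfl
    have e2 : V.character g = c * V.character g := by
      conv_lhs => rw [← FDRep.char_conj V g h]
      unfold FDRep.character
      rw [e1, map_smul, smul_eq_mul]
    by_contra hne
    have hc1 : c = 1 := by
      have := mul_right_cancel₀ hne ((one_mul _).trans e2)
      exact this.symm
    apply hh
    rw [hc1, one_smul] at e1
    rw [hmul, hmul]
    have : h * g = (h * g * h⁻¹) * h := by group
    rw [this, map_mul V.ρ (h * g * h⁻¹) h, e1, ← map_mul]
  set d := Module.finrank ℂ V with hd
  have hin : ∀ g ∈ Z, V.character g * V.character g⁻¹ = (d : ℂ) ^ 2 := by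
    intro g hg
    simp only [Z, Finset.mem_filter, Finset.mem_univ, true_and] at hg
    obtain ⟨c, hc⟩ := aux_schur V hV (V.ρ g) hg
    have e1 : V.character g = c * d := by
      unfold FDRep.character
      rw [hc, map_smul, smul_eq_mul, LinearMap.trace_id]
    have e2 : c * V.character g⁻¹ = d := by
      rw [hd, ← FDRep.char_one, ← mul_inv_cancel g]
      unfold FDRep.character
      rw [map_mul, hc, ← smul_eq_mul, ← map_smul]; rfl
    rw [e1, mul_right_comm, e2]; ring
  have hcard0 : (Nat.card G : ℂ) ≠ 0 := by simp
  haveI : Invertible (Nat.card G : ℂ) := invertibleOfNonzero hcard0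
  have hort := FDRep.char_orthonormal V V
  rw [if_pos ⟨Iso.refl V⟩, ← Finset.sum_subset (Finset.subset_univ Z)
    (by intro g _ hg; rw [hvan g hg, zero_mul]), Finset.sum_congr rfl hin,
    Finset.sum_const, nsmul_eq_mul] at hort
  have hkey : Z.card * d ^ 2 = p ^ n := by
    rw [← hG, ← Nat.card_eq_fintype_card]
    have : (Z.card : ℂ) * (d : ℂ)^2 = Nat.card G := by
      field_simp at hort
      simpa using hort
    exact_mod_cast this
  obtain ⟨m, hm, hZ⟩ := (Nat.dvd_prime_pow hp).1 (Dvd.intro _ hkey)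
  have hd2 : d ^ 2 = p ^ (n - m) := by
    have : p ^ m * d ^ 2 = p ^ m * p ^ (n - m) := by
      rw [← pow_add, Nat.add_sub_cancel' hm, ← hZ, hkey]
    exact Nat.eq_of_mul_eq_mul_left (pow_pos hp.pos m) this
  have hmn : m ≤ n - 2 := by
    by_contra hlt
    have : n - m = 0 ∨ n - m = 1 := by omega
    rcases this with h | h
    · rw [h] at hd2; nlinarith
    · rw [h, pow_one] at hd2
      exact Nat.Prime.not_prime_pow le_rfl (hd2 ▸ hp)
  have hle : Z.card ≤ p ^ (n - 2) := hZ ▸ Nat.pow_le_pow_right hp.pos hmn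
  have hsub : ((Zᶜ : Finset G) : Set G) ⊆ {g : G | V.character g = 0} := by
    intro g hg
    exact hvan g (by simpa using hg)
  have := Set.ncard_le_ncard hsub (Set.toFinite _)
  rw [Set.ncard_coe_finset, Finset.card_compl, hG] at this
  omega
end

section
/- Let p be a prime, let G be a non-abelian finite p-group of order p^n, and let χ be a faithful irreducible complex character of G. Then χ vanishes at exactly p^n − p^(n−1) + p^2 − p elements of G if and only if the set of elements at which χ vanishes is a union of exactly p^2 − 1 conjugacy classes of G. -/
open CategoryTheory

theorem schur_scalar {G : Type} [Group G] (V : FDRep ℂ G) (hV : Simple V) (z : G)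
    (hz : z ∈ Subgroup.center G) : ∃ c : ℂ, V.ρ z = c • LinearMap.id := by
  let f : V ⟶ V := ⟨Action.ρ V z, fun g => by
    have h1 := map_mul (Action.ρ V) z g
    have h2 := map_mul (Action.ρ V) g z
    rw [Subgroup.mem_center_iff.mp hz g] at h2
    exact h1.symm.trans h2⟩
  obtain ⟨c, hc⟩ := CategoryTheory.endomorphism_simple_eq_smul_id ℂ f
  refine ⟨c, ?_⟩
  have h : f.hom.hom.hom = V.ρ z := rfl
  rw [← h, ← hc]
  rfl

theorem simple_nontrivial {G : Type} [Group G] (V : FDRep ℂ G) (hV : Simple V) :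
    (LinearMap.id : V →ₗ[ℂ] V) ≠ 0 := by
  intro h
  apply CategoryTheory.id_nonzero V
  apply Action.Hom.ext
  apply InducedCategory.hom_ext
  apply ModuleCat.hom_ext
  exact h

theorem zeros_of_conj {G : Type} [Group G] (V : FDRep ℂ G) (hV : Simple V)
    (hf : Function.Injective ⇑V.ρ) (x g z : G) (hz : z ∈ Subgroup.center G) (hz1 : z ≠ 1)
    (h : g * x * g⁻¹ = z * x) : V.character x = 0 := by
  obtain ⟨c, hc⟩ := schur_scalar V hV z hz
  have h1 : V.character (z * x) = c * V.character x := by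
    simp [FDRep.character, hc, ← Module.End.one_eq_id]
  rw [← h, FDRep.char_conj] at h1
  by_contra hne
  have : c = 1 := by
    have : (c - 1) * V.character x = 0 := by linear_combination -h1
    rcases mul_eq_zero.mp this with h | h
    · linear_combination h
    · exact absurd h hne
  apply hz1
  apply hf
  rw [hc, this, map_one, one_smul]; rfl

theorem omega_card {G : Type} [Group G] [Fintype G] (V : FDRep ℂ G) (hV : Simple V)
    (hf : Function.Injective ⇑V.ρ) (p : ℕ) (hp : 0 < p) :
    {z : G | z ∈ Subgroup.center G ∧ z ^ p = 1}.ncard ≤ p := by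
  have hs := fun z : Subgroup.center G => schur_scalar V hV z.1 z.2
  choose c hc using hs
  let c' : G → ℂ := fun g => by
    classical exact if h : g ∈ Subgroup.center G then c ⟨g, h⟩ else 0
  have hc' : ∀ z ∈ Subgroup.center G, V.ρ z = c' z • LinearMap.id := by
    intro z hz
    simp only [c', dif_pos hz]
    exact hc ⟨z, hz⟩
  calc _ ≤ ((Polynomial.nthRootsFinset p (1:ℂ) : Finset ℂ) : Set ℂ).ncard := by
        apply Set.ncard_le_ncard_of_injOn c'
        · rintro z ⟨hz, hzp⟩
          simp only [SetLike.mem_coe]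
          rw [Polynomial.mem_nthRootsFinset hp]
          have h1 := hc' z hz
          have h2 : (V.ρ z) ^ p = 1 := by rw [← map_pow, hzp, map_one]
          rw [h1, ← Module.End.one_eq_id, smul_pow, one_pow] at h2
          have h3 : (c' z ^ p - 1) • (LinearMap.id : V →ₗ[ℂ] V) = 0 := by
            rw [sub_smul, ← Module.End.one_eq_id, h2, one_smul, sub_self]
          rcases smul_eq_zero.mp h3 with h | h
          · linear_combination h
          · exact absurd h (simple_nontrivial V hV)
        · rintro z ⟨hz, _⟩ w ⟨hw, _⟩ h
          apply hf
          rw [hc' z hz, hc' w hw, h]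
    _ ≤ p := by
        rw [Set.ncard_coe_finset]
        classical
        unfold Polynomial.nthRootsFinset
        exact (Multiset.toFinset_card_le _).trans (Polynomial.card_nthRoots p 1)
open scoped commutatorElement

theorem cls_ncard {G : Type} [Group G] [Fintype G] (g : G) :
    (ConjClasses.mk g).carrier.ncard = (Subgroup.centralizer {g}).index := by
  rw [← ConjAct.orbit_eq_carrier_conjClasses, ← MulAction.index_stabilizer]
  have h1 := Subgroup.card_mul_index (Subgroup.centralizer {g})
  have h2 := Subgroup.card_mul_index (MulAction.stabilizer (ConjAct G) g)
  rw [← Subgroup.nat_card_centralizer_nat_card_stabilizer] at h2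
  have h3 : Nat.card (ConjAct G) = Nat.card G := rfl
  have h4 : 0 < Nat.card (Subgroup.centralizer {g}) := Nat.card_pos
  apply Nat.eq_of_mul_eq_mul_left h4
  rw [h1, h2, h3]

theorem p_mul_card_le {G : Type} [Group G] [Fintype G] {p n : ℕ} (hp : p.Prime)
    (hG : Fintype.card G = p ^ n) (H K : Subgroup G) (h : H < K) :
    p * Nat.card H ≤ Nat.card K := by
  rw [← Nat.card_eq_fintype_card] at hG
  obtain ⟨a, -, ha⟩ := (Nat.dvd_prime_pow hp).mp (hG ▸ Subgroup.card_subgroup_dvd_card H)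
  obtain ⟨b, -, hb⟩ := (Nat.dvd_prime_pow hp).mp (hG ▸ Subgroup.card_subgroup_dvd_card K)
  have hlt : Nat.card H < Nat.card K := by
    apply lt_of_le_of_ne (Subgroup.card_le_of_le h.le)
    intro he
    exact h.ne (Subgroup.eq_of_le_of_card_ge h.le he.ge)
  rw [ha, hb] at *
  have : a < b := (Nat.pow_lt_pow_iff_right hp.one_lt).mp hlt
  rw [← pow_succ']
  exact Nat.pow_le_pow_right hp.pos this

theorem exists_central_mod {G : Type} [Group G] [Fintype G] {p n : ℕ} (hp : p.Prime)
    (hG : Fintype.card G = p ^ n) (A B : Subgroup G) (hB : B.Normal) (h : ¬ B ≤ A) :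
    ∃ x ∈ B, x ∉ A ∧ ∀ g, ⁅x, g⁆ ∈ A := by
  have := Fact.mk hp
  have hpg : IsPGroup p G := IsPGroup.of_card (by rw [Nat.card_eq_fintype_card, hG])
  have := hpg.isNilpotent
  have hex : ∃ i, ¬ (B ⊓ Subgroup.upperCentralSeries G i ≤ A) :=
    ⟨Group.nilpotencyClass G, by
      rw [Subgroup.upperCentralSeries_nilpotencyClass]; simpa using h⟩
  classical
  obtain ⟨i, hi, hmin⟩ : ∃ i, ¬ (B ⊓ Subgroup.upperCentralSeries G i ≤ A) ∧
      ∀ j < i, (B ⊓ Subgroup.upperCentralSeries G j ≤ A) :=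
    ⟨Nat.find hex, Nat.find_spec hex, fun j hj => not_not.mp (Nat.find_min hex hj)⟩
  cases i with
  | zero => exact absurd (by simp) hi
  | succ i =>
    obtain ⟨x, hx, hxA⟩ := SetLike.not_le_iff_exists.mp hi
    refine ⟨x, hx.1, hxA, fun g => hmin i (Nat.lt_succ_self i) ⟨?_, ?_⟩⟩
    · have h1 : g * x⁻¹ * g⁻¹ ∈ B := hB.conj_mem _ (B.inv_mem hx.1) g
      have := B.mul_mem hx.1 h1
      rw [commutatorElement_def]
      simpa [mul_assoc] using this
    · exact Subgroup.mem_upperCentralSeries_succ_iff.mp hx.2 g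

theorem exists_u {G : Type} [Group G] [Fintype G] {p n : ℕ} (hp : p.Prime)
    (hG : Fintype.card G = p ^ n)
    (hna : ¬ ∀ x y : G, x * y = y * x) :
    ∃ u : G, u ∉ Subgroup.center G ∧ u ^ p ∈ Subgroup.center G ∧
      u ∈ Subgroup.upperCentralSeries G 2 := by
  have h : ¬ (⊤ : Subgroup G) ≤ Subgroup.center G := by
    intro h
    exact hna fun x y => (Subgroup.mem_center_iff.mp (h (Subgroup.mem_top y)) x)
  obtain ⟨x, -, hx, hxg⟩ := exists_central_mod hp hG (Subgroup.center G) ⊤ inferInstance h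
  have hx2 : x ∈ Subgroup.upperCentralSeries G 2 := by
    rw [Subgroup.mem_upperCentralSeries_succ_iff]
    simpa using hxg
  have hex : ∃ j, x ^ (p ^ j) ∈ Subgroup.center G :=
    ⟨n, by rw [← hG, pow_card_eq_one]; exact Subgroup.one_mem _⟩
  classical
  obtain ⟨j, hj, hmin⟩ : ∃ j, x ^ (p ^ j) ∈ Subgroup.center G ∧
      ∀ k < j, x ^ (p ^ k) ∉ Subgroup.center G :=
    ⟨Nat.find hex, Nat.find_spec hex, fun j hj => (Nat.find_min hex hj)⟩
  cases j with
  | zero => simp at hj; exact absurd hj hx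
  | succ j =>
    refine ⟨x ^ p ^ j, hmin j (Nat.lt_succ_self j), ?_, Subgroup.pow_mem _ hx2 _⟩
    rw [← pow_mul, ← pow_succ]; exact hj

theorem comm_pow {G : Type} [Group G] (v g : G) (p : ℕ)
    (hv : ⁅v, g⁆ ∈ Subgroup.center G) (hvp : v ^ p ∈ Subgroup.center G) : ⁅v, g⁆ ^ p = 1 := by
  have h1 : v = ⁅v, g⁆ * (g * v * g⁻¹) := by rw [commutatorElement_def]; group
  have hc : Commute ⁅v, g⁆ (g * v * g⁻¹) := (Subgroup.mem_center_iff.mp hv _).symm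
  have h2 : v ^ p = ⁅v, g⁆ ^ p * (g * v * g⁻¹) ^ p := by
    rw [← hc.mul_pow, ← h1]
  rw [conj_pow, Subgroup.mem_center_iff.mp hvp g, mul_inv_cancel_right] at h2
  exact (right_eq_mul.mp h2)

theorem cls_U {G : Type} [Group G] [Fintype G] {p n : ℕ} (hp : p.Prime)
    (hG : Fintype.card G = p ^ n)
    (hΩ : {z : G | z ∈ Subgroup.center G ∧ z ^ p = 1}.ncard ≤ p) (v : G)
    (hv : v ∉ Subgroup.center G) (hvg : ∀ g, ⁅v, g⁆ ∈ Subgroup.center G)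
    (hvp : v ^ p ∈ Subgroup.center G) : (ConjClasses.mk v).carrier.ncard = p := by
  apply le_antisymm
  · refine le_trans ?_ hΩ
    refine Set.ncard_le_ncard_of_injOn (fun w => v * w⁻¹) ?_ ?_ (Set.toFinite _)
    · intro w hw
      rw [ConjClasses.mem_carrier_iff_mk_eq, ConjClasses.mk_eq_mk_iff_isConj] at hw
      obtain ⟨g, hg⟩ := isConj_iff.mp hw.symm
      have : v * w⁻¹ = ⁅v, g⁆ := by rw [← hg, commutatorElement_def]; group
      simp only [Set.mem_ofPred_eq]
      rw [this]
      exact ⟨hvg g, comm_pow v g p (hvg g) hvp⟩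
    · intro a _ b _ h
      simpa using h
  · rw [cls_ncard]
    rw [← Nat.card_eq_fintype_card] at hG
    obtain ⟨a, -, ha⟩ := (Nat.dvd_prime_pow hp).mp
      (hG ▸ Subgroup.index_dvd_card (Subgroup.centralizer {v}))
    rw [ha]
    have : a ≠ 0 := by
      rintro rfl
      rw [pow_zero, Subgroup.index_eq_one] at ha
      apply hv
      rw [Subgroup.mem_center_iff]
      intro g
      exact Subgroup.mem_centralizer_singleton_iff.mp (ha ▸ Subgroup.mem_top g)
    exact Nat.le_self_pow this p

theorem ncard_le_classes {G : Type} [Group G] [Fintype G] (S : Set G) (c : ℕ)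
    (h : ∀ x ∈ S, (ConjClasses.mk x).carrier.ncard ≤ c) :
    S.ncard ≤ c * (ConjClasses.mk '' S).ncard := by
  classical
  have := Finset.card_le_mul_card_image (f := (ConjClasses.mk : G → ConjClasses G))
    S.toFinset c (by
      intro b hb
      obtain ⟨x, hx, rfl⟩ := Finset.mem_image.mp hb
      refine le_trans ?_ (h x (by simpa using hx))
      rw [← Set.ncard_coe_finset]
      apply Set.ncard_le_ncard _ (Set.toFinite _)
      intro y hy
      simp at hy
      rw [ConjClasses.mem_carrier_iff_mk_eq]
      exact hy.2)
  rw [← Set.ncard_coe_finset, ← Set.ncard_coe_finset] at this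
  simpa using this

theorem classes_le_ncard {G : Type} [Group G] [Fintype G] (S : Set G) (c : ℕ)
    (hS : ∀ x ∈ S, ∀ g, g * x * g⁻¹ ∈ S)
    (h : ∀ x ∈ S, c ≤ (ConjClasses.mk x).carrier.ncard) :
    c * (ConjClasses.mk '' S).ncard ≤ S.ncard := by
  classical
  have := Finset.mul_card_image_le_card (f := (ConjClasses.mk : G → ConjClasses G))
    S.toFinset c (by
      intro b hb
      obtain ⟨x, hx, rfl⟩ := Finset.mem_image.mp hb
      refine le_trans (h x (by simpa using hx)) ?_
      rw [← Set.ncard_coe_finset]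
      apply Set.ncard_le_ncard _ (Set.toFinite _)
      intro y hy
      rw [ConjClasses.mem_carrier_iff_mk_eq] at hy
      simp only [Finset.coe_filter, Set.mem_toFinset, Set.mem_ofPred_eq]
      refine ⟨?_, hy⟩
      rw [ConjClasses.mk_eq_mk_iff_isConj] at hy
      obtain ⟨g, hg⟩ := isConj_iff.mp hy.symm
      rw [← hg]
      exact hS x (by simpa using hx) g)
  rw [← Set.ncard_coe_finset, ← Set.ncard_coe_finset] at this
  simpa using this

theorem image_disj {G : Type} [Group G] (S T : Set G)
    (hS : ∀ x ∈ S, ∀ g, g * x * g⁻¹ ∈ S) (hd : Disjoint S T) :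
    Disjoint (ConjClasses.mk '' S) (ConjClasses.mk '' T) := by
  rw [Set.disjoint_left]
  rintro _ ⟨x, hx, rfl⟩ ⟨y, hy, h⟩
  rw [ConjClasses.mk_eq_mk_iff_isConj] at h
  obtain ⟨g, hg⟩ := isConj_iff.mp h.symm
  exact Set.disjoint_left.mp hd (hg ▸ hS x hx g) hy

theorem M_abelian {G : Type} [Group G] [Fintype G] {p n : ℕ} (hp : p.Prime)
    (hG : Fintype.card G = p ^ n) (M : Subgroup G) (hM : M.Normal)
    (hN : ∀ x ∈ M, ∀ g z : G, z ∈ Subgroup.center G → z ≠ 1 → g * x * g⁻¹ = z * x →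
      x ∈ Subgroup.centralizer (M : Set G)) : M ≤ Subgroup.centralizer (M : Set G) := by
  by_contra hcon
  obtain ⟨x, hxM, hxA, hxg⟩ := exists_central_mod hp hG _ M hM hcon
  have hcM : ∀ m, ⁅x, m⁆ ∈ M := by
    intro m
    have h1 : m * x⁻¹ * m⁻¹ ∈ M := hM.conj_mem _ (M.inv_mem hxM) m
    have := M.mul_mem hxM h1
    rw [commutatorElement_def]
    simpa [mul_assoc] using this
  have hmul : ∀ m ∈ M, ∀ m', ⁅x, m * m'⁆ = ⁅x, m⁆ * ⁅x, m'⁆ := by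
    intro m hm m'
    have h1 : m * ⁅x, m'⁆ = ⁅x, m'⁆ * m := Subgroup.mem_centralizer_iff.mp (hxg m') m hm
    have h2 : ⁅x, m * m'⁆ = ⁅x, m⁆ * (m * ⁅x, m'⁆ * m⁻¹) := by
      simp only [commutatorElement_def]; group
    rw [h2, h1, mul_inv_cancel_right]
  let W : Subgroup G :=
    { carrier := {w | ∃ m ∈ M, w = ⁅x, m⁆}
      mul_mem' := by
        rintro _ _ ⟨a, ha, rfl⟩ ⟨b, hb, rfl⟩
        exact ⟨a * b, M.mul_mem ha hb, (hmul a ha b).symm⟩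
      one_mem' := ⟨1, M.one_mem, by simp⟩
      inv_mem' := by
        rintro _ ⟨a, ha, rfl⟩
        refine ⟨a⁻¹, M.inv_mem ha, ?_⟩
        have := hmul a ha a⁻¹
        rw [mul_inv_cancel, commutatorElement_one_right] at this
        exact inv_eq_of_mul_eq_one_right this.symm }
  have hWn : W.Normal := by
    refine ⟨?_⟩
    rintro _ ⟨m, hm, rfl⟩ g
    refine ⟨g * m * g⁻¹, hM.conj_mem m hm g, ?_⟩
    set m' := g * m * g⁻¹ with hm'
    have hm'M : m' ∈ M := hM.conj_mem m hm g
    have ha := Subgroup.inv_mem _ (hxg g)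
    set a := ⁅x, g⁆⁻¹ with hadef
    have hax : g * x * g⁻¹ = a * x := by rw [hadef, commutatorElement_def]; group
    have h1 : m' * a = a * m' := Subgroup.mem_centralizer_iff.mp ha m' hm'M
    have h2 : ⁅x, m'⁆ * a = a * ⁅x, m'⁆ := Subgroup.mem_centralizer_iff.mp ha _ (hcM m')
    have h3 : g * ⁅x, m⁆ * g⁻¹ = ⁅g * x * g⁻¹, m'⁆ := by
      rw [hm']; simp only [commutatorElement_def]; group
    have h4 : a⁻¹ * m'⁻¹ = m'⁻¹ * a⁻¹ := by rw [← mul_inv_rev, h1, mul_inv_rev]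
    have h5 : ⁅a * x, m'⁆ = a * ⁅x, m'⁆ * a⁻¹ := by
      have : ⁅a * x, m'⁆ = a * x * m' * x⁻¹ * (a⁻¹ * m'⁻¹) := by
        simp only [commutatorElement_def]; group
      rw [this, h4]
      simp only [commutatorElement_def]; group
    rw [h3, hax, h5, ← h2, mul_inv_cancel_right]
  have hWb : ¬ W ≤ ⊥ := by
    intro hb
    apply hxA
    rw [Subgroup.mem_centralizer_iff]
    intro m hm
    have : ⁅x, m⁆ ∈ (⊥ : Subgroup G) := hb ⟨m, hm, rfl⟩
    rw [Subgroup.mem_bot, commutatorElement_eq_one_iff_mul_comm] at this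
    exact this.symm
  obtain ⟨w, ⟨m, hm, rfl⟩, hw1, hwg⟩ := exists_central_mod hp hG ⊥ W hWn hWb
  have hwZ : ⁅x, m⁆ ∈ Subgroup.center G := by
    rw [Subgroup.mem_center_iff]
    intro g
    exact (commutatorElement_eq_one_iff_mul_comm.mp (Subgroup.mem_bot.mp (hwg g))).symm
  exact hxA (hN x hxM m ⁅x, m⁆⁻¹ (Subgroup.inv_mem _ hwZ)
    (fun h => hw1 (Subgroup.mem_bot.mpr (inv_eq_one.mp h)))
    (by rw [commutatorElement_def]; group))

theorem ncard_coe {G : Type} [Group G] (H : Subgroup G) : (H : Set G).ncard = Nat.card H := rfl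

theorem main_group {G : Type} [Group G] [Fintype G] {p n : ℕ} (hp : p.Prime)
    (hG : Fintype.card G = p ^ n)
    (hna : ¬ ∀ x y : G, x * y = y * x) (N : Set G)
    (hN0 : ∀ x g z : G, z ∈ Subgroup.center G → z ≠ 1 → g * x * g⁻¹ = z * x → x ∈ N)
    (hΩ : {z : G | z ∈ Subgroup.center G ∧ z ^ p = 1}.ncard ≤ p) :
    N.ncard = p ^ n - p ^ (n - 1) + p ^ 2 - p ↔
      (ConjClasses.mk '' N).ncard = p ^ 2 - 1 := by
  have hG' : Nat.card G = p ^ n := by rw [Nat.card_eq_fintype_card, hG]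
  obtain ⟨u, huZ, hup, hu2⟩ := exists_u hp hG hna
  have h2Z : ∀ v ∈ Subgroup.upperCentralSeries G 2, ∀ g, ⁅v, g⁆ ∈ Subgroup.center G := by
    intro v hv g
    have := Subgroup.mem_upperCentralSeries_succ_iff.mp hv g
    rwa [Subgroup.upperCentralSeries_one] at this
  obtain ⟨M, hMdef⟩ : ∃ M : Subgroup G, M = Subgroup.centralizer {u} := ⟨_, rfl⟩
  obtain ⟨U, hUdef⟩ : ∃ U : Subgroup G, U = Subgroup.center G ⊔ Subgroup.zpowers u := ⟨_, rfl⟩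
  have hmemM : ∀ x, x ∈ M ↔ x * u = u * x := by
    intro x; rw [hMdef, Subgroup.mem_centralizer_singleton_iff]
  have hUu : u ∈ U := hUdef ▸ Subgroup.mem_sup_right (Subgroup.mem_zpowers u)
  have hZU : Subgroup.center G < U := by
    refine lt_of_le_of_ne (hUdef ▸ le_sup_left) ?_
    intro h
    exact huZ (h ▸ hUu)
  have hU2 : ∀ v ∈ U, ∀ g, ⁅v, g⁆ ∈ Subgroup.center G := by
    have : U ≤ Subgroup.upperCentralSeries G 2 := by
      rw [hUdef]
      refine sup_le ?_ (by rwa [Subgroup.zpowers_le])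
      intro z hz
      rw [Subgroup.mem_upperCentralSeries_succ_iff]
      intro g
      rw [commutatorElement_eq_one_iff_mul_comm.mpr (Subgroup.mem_center_iff.mp hz g).symm]
      exact Subgroup.one_mem _
    exact fun v hv => h2Z v (this hv)
  have hUM : U ≤ Subgroup.centralizer (M : Set G) := by
    rw [hUdef]
    refine sup_le (Subgroup.center_le_centralizer _) ?_
    rw [Subgroup.zpowers_le, Subgroup.mem_centralizer_iff]
    intro m hm
    exact (hmemM m).mp hm
  have huM : u ∈ M := (hmemM u).mpr rfl
  have hUM' : U ≤ M := by
    intro v hv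
    rw [hmemM]
    exact (Subgroup.mem_centralizer_iff.mp (hUM hv) u huM).symm
  have hUp : ∀ v ∈ U, v ^ p ∈ Subgroup.center G := by
    intro v hv
    rw [hUdef, Subgroup.mem_sup_of_normal_left] at hv
    obtain ⟨z, hz, w, ⟨k, rfl⟩, rfl⟩ := hv
    have hc : Commute z (u ^ k) := (Subgroup.mem_center_iff.mp hz _).symm
    simp only []
    rw [hc.mul_pow, ← zpow_natCast (u ^ k), zpow_comm, zpow_natCast]
    exact Subgroup.mul_mem _ (Subgroup.pow_mem _ hz _) (Subgroup.zpow_mem _ hup _)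
  have hMn : M.Normal := by
    refine ⟨fun m hm g => ?_⟩
    have hz := h2Z u hu2 g⁻¹
    set z := ⁅u, g⁻¹⁆ with hzdef
    have h1 : g⁻¹ * u * g = z⁻¹ * u := by rw [hzdef, commutatorElement_def]; group
    have h2 := Subgroup.mem_center_iff.mp (Subgroup.inv_mem _ hz) m
    rw [hmemM] at hm ⊢
    calc g * m * g⁻¹ * u = g * (m * (g⁻¹ * u * g)) * g⁻¹ := by group
      _ = g * ((g⁻¹ * u * g) * m) * g⁻¹ := by
          congr 2
          rw [h1, ← mul_assoc, h2, mul_assoc, hm, mul_assoc]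
      _ = u * (g * m * g⁻¹) := by group
  have hclsU : ∀ v ∈ (U : Set G) \ Subgroup.center G, (ConjClasses.mk v).carrier.ncard = p := by
    rintro v ⟨hv, hvZ⟩
    exact cls_U hp hG hΩ v hvZ (hU2 v hv) (hUp v hv)
  have hMi : M.index = p := by
    rw [hMdef, ← cls_ncard]
    exact hclsU u ⟨hUu, huZ⟩
  have hMc := Subgroup.card_mul_index M
  rw [hMi, hG'] at hMc
  have hZp : p ≤ Nat.card (Subgroup.center G) := by
    have hlt : (⊥ : Subgroup G) < Subgroup.center G := by
      rw [bot_lt_iff_ne_bot]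
      intro hb
      have h := hU2 u hUu
      apply huZ
      rw [Subgroup.mem_center_iff]
      intro g
      have := h g
      rw [hb, Subgroup.mem_bot, commutatorElement_eq_one_iff_mul_comm] at this
      exact this.symm
    have := p_mul_card_le hp hG _ _ hlt
    simpa using this
  have hUc := p_mul_card_le hp hG _ _ hZU
  obtain ⟨S, hSdef⟩ : ∃ S : Set G, S = (M : Set G)ᶜ := ⟨_, rfl⟩
  obtain ⟨T, hTdef⟩ : ∃ T : Set G, T = (U : Set G) \ Subgroup.center G := ⟨_, rfl⟩
  rw [← hTdef] at hclsU
  have hSN : S ⊆ N := by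
    intro x hx
    rw [hSdef, Set.mem_compl_iff, SetLike.mem_coe, hmemM] at hx
    refine hN0 x u ⁅u, x⁆ (hU2 u hUu x) ?_ (by rw [commutatorElement_def]; group)
    intro h
    exact hx (commutatorElement_eq_one_iff_mul_comm.mp h).symm
  have hTN : T ⊆ N := by
    intro v hv
    rw [hTdef] at hv
    obtain ⟨hv, hvZ⟩ := hv
    rw [SetLike.mem_coe, Subgroup.mem_center_iff] at hvZ
    push Not at hvZ
    obtain ⟨g, hg⟩ := hvZ
    refine hN0 v g ⁅v, g⁆⁻¹ (Subgroup.inv_mem _ (hU2 v hv g)) ?_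
      (by rw [commutatorElement_def]; group)
    intro h
    exact hg (commutatorElement_eq_one_iff_mul_comm.mp (inv_eq_one.mp h)).symm
  have hST : Disjoint S T := by
    rw [Set.disjoint_left, hSdef, hTdef]
    intro x hx hx'
    exact hx (hUM' hx'.1)
  have hSinv : ∀ x ∈ S, ∀ g, g * x * g⁻¹ ∈ S := by
    intro x hx g
    rw [hSdef] at hx ⊢
    intro h
    apply hx
    have := hMn.conj_mem _ h g⁻¹
    simpa [mul_assoc] using this
  have hTinv : ∀ x ∈ T, ∀ g, g * x * g⁻¹ ∈ T := by
    intro x hx g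
    rw [hTdef] at hx ⊢
    refine ⟨?_, fun h => hx.2 ?_⟩
    · have : g * x * g⁻¹ = ⁅x, g⁆⁻¹ * x := by rw [commutatorElement_def]; group
      rw [this]
      exact U.mul_mem (U.inv_mem (hZU.le (hU2 x hx.1 g))) hx.1
    · have := (inferInstance : (Subgroup.center G).Normal).conj_mem _ h g⁻¹
      simpa [mul_assoc] using this
  have hSTinv : ∀ x ∈ S ∪ T, ∀ g, g * x * g⁻¹ ∈ S ∪ T := by
    rintro x (hx | hx) g
    · exact Or.inl (hSinv x hx g)
    · exact Or.inr (hTinv x hx g)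
  have hSTN : S ∪ T ⊆ N := Set.union_subset hSN hTN
  have hSc : S.ncard + Nat.card M = p ^ n := by
    rw [← hG', ← ncard_coe, hSdef, add_comm]
    exact Set.ncard_add_ncard_compl _ (Set.toFinite _) (Set.toFinite _)
  have hTc : T.ncard + Nat.card (Subgroup.center G) = Nat.card U := by
    rw [← ncard_coe, ← ncard_coe, hTdef]
    exact Set.ncard_sdiff_add_ncard_of_subset hZU.le (Set.toFinite _)
  have hSTc : (S ∪ T).ncard = S.ncard + T.ncard := Set.ncard_union_eq hST
  have hSTim : (ConjClasses.mk '' (S ∪ T)).ncard =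
      (ConjClasses.mk '' S).ncard + (ConjClasses.mk '' T).ncard := by
    rw [Set.image_union]
    exact Set.ncard_union_eq (image_disj S T hSinv hST) (Set.toFinite _) (Set.toFinite _)
  have hn2 : 2 ≤ n := by
    have h1 : Nat.card U ≤ p ^ n := hG' ▸ Subgroup.card_le_card_group U
    have h2 : p ^ 2 ≤ p ^ n := by nlinarith
    exact (Nat.pow_le_pow_iff_right hp.one_lt).mp h2
  obtain ⟨k, rfl⟩ := Nat.exists_eq_add_of_le' hn2
  have hP : 0 < p ^ k := Nat.pow_pos hp.pos
  have hclsS : ∀ y ∈ S, (ConjClasses.mk y).carrier.ncard ≤ p ^ k := by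
    intro y hy
    have hlt : Subgroup.center G < Subgroup.centralizer {y} := by
      refine lt_of_le_of_ne (Subgroup.center_le_centralizer _) ?_
      intro h
      have : y ∈ Subgroup.center G := by
        rw [h, Subgroup.mem_centralizer_singleton_iff]
      rw [hSdef] at hy
      exact hy (hUM' (hZU.le this))
    have h1 := p_mul_card_le hp hG _ _ hlt
    have h2 := Subgroup.card_mul_index (Subgroup.centralizer {y})
    rw [cls_ncard]
    rw [hG', pow_add] at h2
    have h3 : p ^ 2 ≤ Nat.card (Subgroup.centralizer {y}) := by nlinarith
    have h4 : p ^ 2 * (Subgroup.centralizer {y}).index ≤ p ^ 2 * p ^ k := by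
      calc _ ≤ _ := Nat.mul_le_mul_right _ h3
        _ = _ := by rw [h2, mul_comm]
    exact Nat.le_of_mul_le_mul_left h4 (Nat.pow_pos hp.pos)
  obtain ⟨q, hq⟩ : ∃ q, p = q + 1 := ⟨p - 1, by have := hp.pos; omega⟩
  have hq0 : 0 < q := by have := hp.two_le; omega
  have hMc' : Nat.card M = p ^ k * p := by
    apply Nat.eq_of_mul_eq_mul_right hp.pos
    rw [hMc]; ring
  have hSc' : S.ncard = p ^ k * (p * q) := by
    rw [hMc'] at hSc
    have : p ^ (k + 2) = p ^ k * (p * q) + p ^ k * p := by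
      rw [pow_add]
      have : p ^ 2 = p * q + p := by rw [hq]; ring
      rw [this]; ring
    omega
  have hTge : q * Nat.card (Subgroup.center G) ≤ T.ncard := by
    have : p * Nat.card (Subgroup.center G) = q * Nat.card (Subgroup.center G)
      + Nat.card (Subgroup.center G) := by rw [hq]; ring
    omega
  have hTge' : p * q ≤ T.ncard := by nlinarith
  have e1 : p ^ (k + 2) - p ^ (k + 2 - 1) + p ^ 2 - p = p ^ k * (p * q) + p * q := by
    have a1 : p ^ (k + 2) = p ^ k * (p * q) + p ^ (k + 2 - 1) := by
      have : k + 2 - 1 = k + 1 := by omega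
      rw [this, hq]; ring
    have a2 : p ^ 2 = p * q + p := by rw [hq]; ring
    omega
  have e2 : p ^ 2 - 1 = p * q + q := by
    have a2 : p ^ 2 = p * q + q + 1 := by rw [hq]; ring
    omega
  rw [e1, e2]
  have hcs : p * q ≤ (ConjClasses.mk '' S).ncard := by
    have := ncard_le_classes S _ hclsS
    rw [hSc'] at this
    exact Nat.le_of_mul_le_mul_left this hP
  have hTle := ncard_le_classes T p (fun x hx => (hclsU x hx).le)
  have hct : q ≤ (ConjClasses.mk '' T).ncard :=
    Nat.le_of_mul_le_mul_left (hTge'.trans hTle) hp.pos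
  constructor
  · intro hN
    have hNeq : S ∪ T = N :=
      Set.eq_of_subset_of_ncard_le hSTN (by rw [hN, hSTc, hSc']; omega) (Set.toFinite _)
    have hTc' : T.ncard = p * q := by
      rw [← hNeq, hSTc, hSc'] at hN; omega
    have hZc : Nat.card (Subgroup.center G) = p := by
      apply le_antisymm _ hZp
      rw [hTc', mul_comm p q] at hTge
      exact Nat.le_of_mul_le_mul_left hTge hq0
    have hMab : M ≤ Subgroup.centralizer (M : Set G) := by
      apply M_abelian hp hG M hMn
      intro x hx g z hz hz1 h
      have := hN0 x g z hz hz1 h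
      rw [← hNeq] at this
      rcases this with h | h
      · rw [hSdef] at h; exact absurd hx h
      · rw [hTdef] at h; exact hUM h.1
    have hclsS' : ∀ y ∈ S, p ^ k ≤ (ConjClasses.mk y).carrier.ncard := by
      intro y hy
      rw [cls_ncard]
      have hle : Subgroup.centralizer {y} ⊓ M ≤ Subgroup.center G := by
        rintro c ⟨hcy, hcM⟩
        have hlt : M < Subgroup.centralizer {c} := by
          refine lt_of_le_of_ne ?_ ?_
          · intro m hm
            rw [Subgroup.mem_centralizer_singleton_iff]
            exact Subgroup.mem_centralizer_iff.mp (hMab hcM) m hm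
          · intro h
            rw [hSdef] at hy
            apply hy
            rw [h]
            simp only [SetLike.mem_coe]
            rw [Subgroup.mem_centralizer_singleton_iff]
            exact (Subgroup.mem_centralizer_singleton_iff.mp hcy).symm
        have h1 := p_mul_card_le hp hG _ _ hlt
        have htop : Subgroup.centralizer {c} = ⊤ := by
          apply Subgroup.eq_top_of_le_card
          rw [hG', ← hMc, mul_comm]; exact h1
        rw [Subgroup.mem_center_iff]
        intro g
        exact Subgroup.mem_centralizer_singleton_iff.mp (htop ▸ Subgroup.mem_top g)
      have h1 := Subgroup.index_inf_le (H := Subgroup.centralizer {y}) (K := M)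
      have h2 : (Subgroup.center G).index ≤ (Subgroup.centralizer {y} ⊓ M).index :=
        Nat.le_of_dvd (Nat.pos_of_ne_zero Subgroup.index_ne_zero_of_finite)
          (Subgroup.index_dvd_of_le hle)
      have h3 := Subgroup.card_mul_index (Subgroup.center G)
      rw [hZc, hG'] at h3
      have h4 : (Subgroup.center G).index = p ^ k * p := by
        apply Nat.eq_of_mul_eq_mul_left hp.pos
        rw [h3]; ring
      rw [hMi] at h1
      rw [h4] at h2
      exact Nat.le_of_mul_le_mul_right (h2.trans h1) hp.pos
    have b1 := classes_le_ncard S _ hSinv hclsS'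
    have b2 := classes_le_ncard T p hTinv (fun x hx => (hclsU x hx).ge)
    rw [hSc'] at b1
    rw [hTc'] at b2
    have b1' := Nat.le_of_mul_le_mul_left b1 hP
    have b2' := Nat.le_of_mul_le_mul_left b2 hp.pos
    rw [← hNeq, hSTim]
    omega
  · intro hN
    have hsub : ConjClasses.mk '' (S ∪ T) ⊆ ConjClasses.mk '' N := Set.image_mono hSTN
    have heq := Set.eq_of_subset_of_ncard_le hsub (by rw [hN, hSTim]; omega) (Set.toFinite _)
    have hNeq : N = S ∪ T := by
      apply Set.Subset.antisymm _ hSTN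
      intro x hx
      have : ConjClasses.mk x ∈ ConjClasses.mk '' (S ∪ T) := heq ▸ Set.mem_image_of_mem _ hx
      obtain ⟨y, hy, hxy⟩ := this
      rw [ConjClasses.mk_eq_mk_iff_isConj] at hxy
      obtain ⟨g, hg⟩ := isConj_iff.mp hxy
      exact hg ▸ hSTinv y hy g
    rw [hNeq, hSTim] at hN
    have hct' : (ConjClasses.mk '' T).ncard = q := by omega
    rw [hct'] at hTle
    rw [hNeq, hSTc, hSc']
    omega

/-- Let `G` be a non-abelian `p`-group of order `p^n` and `χ` a faithful
irreducible complex character of `G`. Then `χ` vanishes at exactly `p^n - p^(n-1) + p^2 - p`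
elements of `G` if and only if its set of zeros consists of exactly `p^2 - 1` conjugacy
classes of `G`. -/
theorem stmt9 {G : Type} [Group G] [Fintype G] {p n : ℕ} (hp : p.Prime)
    (hG : Fintype.card G = p ^ n)
    (hna : ¬ ∀ x y : G, x * y = y * x)
    (V : FDRep ℂ G) (hV : Simple V)
    (hfaithful : Function.Injective ⇑V.ρ) :
    {g : G | V.character g = 0}.ncard = p ^ n - p ^ (n - 1) + p ^ 2 - p ↔
      (ConjClasses.mk '' {g : G | V.character g = 0}).ncard = p ^ 2 - 1 := by
  exact main_group hp hG hna _ (fun x g z hz hz1 h => zeros_of_conj V hV hfaithful x g z hz hz1 h)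
    (omega_card V hV hfaithful p hp.pos)
end

section
/- Let G be a finite nilpotent group and let χ be an irreducible complex character of G. Then the number of elements x ∈ G such that χ(x) = 0 or χ(x) is a root of unity is at least |G|/2. -/
open CategoryTheory

lemma schur_aux {G : Type} [Group G] (V : FDRep ℂ G) (hV : Simple V) (f : V →ₗ[ℂ] V)
    (hf : ∀ g, f * V.ρ g = V.ρ g * f) : ∃ c : ℂ, f = c • LinearMap.id := by
  let F : V ⟶ V := ⟨InducedCategory.homMk (ModuleCat.ofHom f), fun g => by
    ext1
    ext1
    exact LinearMap.congr_fun (hf g) _⟩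
  obtain ⟨c, hc⟩ := endomorphism_simple_eq_smul_id ℂ F
  refine ⟨c, ?_⟩
  have := congrArg (fun F : V ⟶ V => F.hom.hom.hom) hc
  exact this.symm

lemma vanish_aux {G : Type} [Group G] (V : FDRep ℂ G) (a g : G) (c : ℂ)
    (hc : V.ρ (a * g * a⁻¹ * g⁻¹) = c • LinearMap.id)
    (h : V.ρ a * V.ρ g ≠ V.ρ g * V.ρ a) : V.character g = 0 := by
  have h1 : V.ρ (a * g * a⁻¹) = c • V.ρ g := by
    have : a * g * a⁻¹ = (a * g * a⁻¹ * g⁻¹) * g := by group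
    rw [this, map_mul, hc]
    rfl
  have h2 : V.character g = c * V.character g := by
    conv_lhs => rw [← V.char_conj g a]
    unfold FDRep.character
    rw [h1, map_smul, smul_eq_mul]
  by_contra h0
  have hc1 : c = 1 := by
    have : (c - 1) * V.character g = 0 := by linear_combination -h2
    rcases mul_eq_zero.mp this with h | h
    · linear_combination h
    · exact absurd h h0
  apply h
  rw [hc1, one_smul] at h1
  rw [← map_mul, ← h1, ← map_mul]
  congr 1
  group

/-- If `G` is a finite nilpotent group and `χ` is an irreducible complex
character of `G`, then `χ(x)` is zero or a root of unity for at least `|G|/2` elements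
`x ∈ G`. -/
theorem stmt12 {G : Type} [Group G] [Fintype G] [Group.IsNilpotent G]
    (V : FDRep ℂ G) (hV : Simple V) :
    Fintype.card G ≤
      2 * {x : G | V.character x = 0 ∨ ∃ m : ℕ, 0 < m ∧ V.character x ^ m = 1}.ncard := by
  classical
  by_cases hall : ∀ g, ∃ c : ℂ, V.ρ g = c • LinearMap.id
  · have hsc : ∀ f : V →ₗ[ℂ] V, ∃ c : ℂ, f = c • LinearMap.id := fun f => by
      refine schur_aux V hV f fun g => ?_
      obtain ⟨c, hc⟩ := hall g
      rw [hc]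
      ext v
      simp
    have hr : Module.finrank ℂ V ≤ 1 := by
      have h1 : Module.finrank ℂ (V →ₗ[ℂ] V) ≤ 1 :=
        finrank_le_one LinearMap.id fun f => by
          obtain ⟨c, hc⟩ := hsc f
          exact ⟨c, hc.symm⟩
      rw [Module.finrank_linearMap] at h1
      nlinarith
    have huniv : {x : G | V.character x = 0 ∨ ∃ m : ℕ, 0 < m ∧ V.character x ^ m = 1}
        = Set.univ := by
      ext x
      simp only [Set.mem_ofPred_eq, Set.mem_univ, iff_true]
      obtain ⟨c, hc⟩ := hall x
      have hch : V.character x = c * Module.finrank ℂ V := by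
        unfold FDRep.character
        rw [hc, map_smul, LinearMap.trace_id, smul_eq_mul]
      rcases Nat.le_one_iff_eq_zero_or_eq_one.mp hr with h | h
      · left; rw [hch, h]; simp
      · right
        refine ⟨Fintype.card G, Fintype.card_pos, ?_⟩
        have hp : V.ρ (x ^ Fintype.card G) = c ^ Fintype.card G • LinearMap.id := by
          rw [map_pow, hc, smul_pow]
          congr 1
          exact one_pow _
        rw [pow_card_eq_one, map_one] at hp
        have ht := congrArg (LinearMap.trace ℂ V) hp
        rw [map_smul, LinearMap.trace_id, LinearMap.trace_one, h] at ht
        rw [hch, h]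
        simpa using ht.symm
    rw [huniv, Set.ncard_univ, Nat.card_eq_fintype_card]
    omega
  · obtain ⟨n, hn⟩ := Group.IsNilpotent.nilpotent G
    have key : ∃ a : G, (¬ ∃ c : ℂ, V.ρ a = c • LinearMap.id) ∧
        ∀ g, ∃ c : ℂ, V.ρ (a * g * a⁻¹ * g⁻¹) = c • LinearMap.id := by
      by_contra hk
      push Not at hk
      apply hall
      have : ∀ n, ∀ g ∈ Subgroup.upperCentralSeries G n, ∃ c : ℂ, V.ρ g = c • LinearMap.id := by
        intro n
        induction n with
        | zero =>
          intro g hg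
          rw [Subgroup.upperCentralSeries_zero, Subgroup.mem_bot] at hg
          exact ⟨1, by rw [hg, map_one, one_smul]; rfl⟩
        | succ n ih =>
          intro a ha
          by_contra hna
          obtain ⟨g, hg⟩ := hk a (by push Not at hna; exact hna)
          obtain ⟨c, hc⟩ := ih _ (Subgroup.mem_upperCentralSeries_succ_iff.mp ha g)
          exact hg c hc
      intro g
      exact this n g (by rw [hn]; trivial)
    obtain ⟨a, ha, hag⟩ := key
    let C : Subgroup G := 
      { carrier := {g | Commute (V.ρ a) (V.ρ g)}
        mul_mem' := fun {x y} hx hy => by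
          simp only [Set.mem_ofPred_eq, map_mul] at *
          exact hx.mul_right hy
        one_mem' := by simp
        inv_mem' := fun {x} hx => by
          simp only [Set.mem_ofPred_eq] at *
          have h1 : V.ρ x * V.ρ x⁻¹ = 1 := by rw [← map_mul]; simp
          have h2 : V.ρ x⁻¹ * V.ρ x = 1 := by rw [← map_mul]; simp
          exact Commute.units_inv_right (u := ⟨V.ρ x, V.ρ x⁻¹, h1, h2⟩) hx }
    have hC : C ≠ ⊤ := by
      intro h
      refine ha (schur_aux V hV _ fun g => ?_)
      have : g ∈ C := by rw [h]; trivial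
      exact this
    have hidx := C.one_lt_index_of_ne_top hC
    have hmul := C.card_mul_index
    have hsub : (C : Set G)ᶜ ⊆
        {x : G | V.character x = 0 ∨ ∃ m : ℕ, 0 < m ∧ V.character x ^ m = 1} := by
      intro g hg
      obtain ⟨c, hc⟩ := hag g
      exact Or.inl (vanish_aux V a g c hc hg)
    have h1 := Set.ncard_le_ncard hsub (Set.toFinite _)
    have h2 := Set.ncard_add_ncard_compl (C : Set G)
    have h3 : (C : Set G).ncard = Nat.card C := rfl
    rw [Nat.card_eq_fintype_card] at h2
    rw [Nat.card_eq_fintype_card (α := G)] at hmul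
    nlinarith
end
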